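/- Assume ω > 0 and m ≥ 2, and let c'_1 = max c^{∖k}. If |γ| ≥ ω c'_1 + S(c'_1 + ε_c), then z* = (sign(γ)/ω)·(|γ| − S(c'_1 + ε_c)) is a minimizer over ℝ of the function G. -/

import Mathlib

open Finset Filter

noncomputable section

/-- The sign of a real number, with the convention `sgn 0 = 1`. -/
def sgn (t : ℝ) : ℝ := if t < 0 then -1 else 1

/-- A permutation sorting the absolute values of `β` in nonincreasing order. -/
def sortPerm {p : ℕ} (β : Fin p → ℝ) : Equiv.Perm (Fin p) :=
  (Fin.revPerm).trans (Tuple.sort fun j => |β j|)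

/-- The sorted ℓ₁ norm `J(β) = Σ_j λ_j |β|_(j)`. -/
def sortedL1 {p : ℕ} (lam β : Fin p → ℝ) : ℝ :=
  ∑ j, lam j * |β (sortPerm β j)|

/-- `β(z)`: the vector obtained from `β` by replacing entries of the cluster
`{i : |β i| = ck}` by `sign(β i) * z`. -/
def cupd {p : ℕ} (β : Fin p → ℝ) (ck z : ℝ) : Fin p → ℝ :=
  fun i => if |β i| = ck then sgn (β i) * z else β i

/-- The partial sorted ℓ₁ norm `H(z) = J(β(z))`. -/
def Hfun {p : ℕ} (lam β : Fin p → ℝ) (ck : ℝ) (z : ℝ) : ℝ :=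
  sortedL1 lam (cupd β ck z)

/-- `S(w) = Σ_{j ∈ C(w)} λ_{(j)⁻_w}`, where `C(w) = {j : |β(w)_j| = |w|}`. -/
def Sval {p : ℕ} (lam β : Fin p → ℝ) (ck : ℝ) (w : ℝ) : ℝ :=
  ∑ j, if |cupd β ck w j| = |w| then lam ((sortPerm (cupd β ck w))⁻¹ j) else 0

/-- squared Euclidean norm -/
def sqnorm {n : ℕ} (v : Fin n → ℝ) : ℝ := ∑ i, (v i) ^ 2

/-- `G(z) = (1/2)‖y − Xβ(z)‖² + H(z)`. -/
def Gfun {n p : ℕ} (lam : Fin p → ℝ) (X : Matrix (Fin n) (Fin p) ℝ) (y : Fin n → ℝ)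
    (β : Fin p → ℝ) (ck : ℝ) (z : ℝ) : ℝ :=
  (1/2) * sqnorm (fun i => y i - ∑ j, X i j * cupd β ck z j) + Hfun lam β ck z

/-- `x̃ = Σ_{j ∈ C_k} sign(β_j) X_{:j}`. -/
def xtil {n p : ℕ} (X : Matrix (Fin n) (Fin p) ℝ) (β : Fin p → ℝ) (ck : ℝ) : Fin n → ℝ :=
  fun i => ∑ j, if |β j| = ck then sgn (β j) * X i j else 0

/-- `γ = c_k ω + x̃ᵀ r` where `r = y − Xβ` and `ω = ‖x̃‖²`. -/
def gam {n p : ℕ} (X : Matrix (Fin n) (Fin p) ℝ) (y : Fin n → ℝ) (β : Fin p → ℝ) (ck : ℝ) : ℝ :=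
  ck * sqnorm (xtil X β ck) + ∑ i, xtil X β ck i * (y i - ∑ j, X i j * β j)

end

lemma abs_sgn (t : ℝ) : |sgn t| = 1 := by
  unfold sgn; split_ifs <;> simp

lemma sgn_mul_abs (t : ℝ) : sgn t * |t| = t := by
  unfold sgn
  split_ifs with h
  · rw [abs_of_neg h]; ring
  · rw [abs_of_nonneg (not_lt.mp h), one_mul]

lemma sgn_mul_self (t : ℝ) : sgn t * t = |t| := by
  unfold sgn
  split_ifs with h
  · rw [abs_of_neg h]; ring
  · rw [abs_of_nonneg (not_lt.mp h), one_mul]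

lemma abs_cupd {p : ℕ} (β : Fin p → ℝ) (ck z : ℝ) (j : Fin p) :
    |cupd β ck z j| = if |β j| = ck then |z| else |β j| := by
  unfold cupd
  split_ifs
  · rw [abs_mul, abs_sgn, one_mul]
  · rfl

lemma antitone_abs_comp_sortPerm {p : ℕ} (b : Fin p → ℝ) :
    Antitone fun j => |b (sortPerm b j)| := fun _ _ hij =>
  Tuple.monotone_sort (fun j => |b j|) (Fin.rev_le_rev.mpr hij)

/-- The rearrangement inequality: sorting maximizes the weighted sum of absolute values. -/
lemma sum_mul_abs_comp_perm_le {p : ℕ} {lam b : Fin p → ℝ} (hlam : Antitone lam)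
    {σ : Equiv.Perm (Fin p)} (hσ : Antitone fun j => |b (σ j)|) (τ : Equiv.Perm (Fin p)) :
    ∑ j, lam j * |b (τ j)| ≤ ∑ j, lam j * |b (σ j)| := by
  simpa using (hlam.monovary hσ).sum_mul_comp_perm_le_sum_mul (σ := τ.trans σ.symm)

lemma sum_mul_abs_comp_perm_le_sortedL1 {p : ℕ} {lam : Fin p → ℝ} (hlam : Antitone lam)
    (b : Fin p → ℝ) (τ : Equiv.Perm (Fin p)) :
    ∑ j, lam j * |b (τ j)| ≤ sortedL1 lam b :=
  sum_mul_abs_comp_perm_le hlam (antitone_abs_comp_sortPerm b) τ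

/-- A permutation sorting `β(v)` with `|v|` above all other magnitudes also sorts `β(z)` whenever
`|z|` is at least all other magnitudes. -/
lemma antitone_abs_cupd_of_top {p : ℕ} {β : Fin p → ℝ} {ck c1 v z : ℝ}
    (hβ : ∀ j, |β j| ≠ ck → |β j| ≤ c1) (hv : c1 < |v|) (hz : c1 ≤ |z|)
    {σ : Equiv.Perm (Fin p)} (hσ : Antitone fun j => |cupd β ck v (σ j)|) :
    Antitone fun j => |cupd β ck z (σ j)| := by
  intro i j hij
  have h := hσ hij
  simp only [abs_cupd] at h ⊢
  split_ifs at h ⊢ with hj hi hi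
  · exact le_rfl
  · exact absurd (h.trans (hβ _ hi)) (not_le.mpr hv)
  · exact (hβ _ hj).trans hz
  · exact h

/-- The weighted sum along a permutation splits into the cluster and the remaining entries. -/
lemma sum_mul_abs_cupd_perm {p : ℕ} (lam β : Fin p → ℝ) (ck z : ℝ) (σ : Equiv.Perm (Fin p)) :
    ∑ j, lam j * |cupd β ck z (σ j)| =
      (∑ j, if |β j| = ck then lam (σ⁻¹ j) else 0) * |z| +
        ∑ j, if |β j| = ck then 0 else lam (σ⁻¹ j) * |β j| := by
  rw [← Equiv.sum_comp σ⁻¹, Finset.sum_mul, ← Finset.sum_add_distrib]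
  refine Finset.sum_congr rfl fun j _ => ?_
  rw [show σ (σ⁻¹ j) = j from σ.apply_symm_apply j, abs_cupd]
  split_ifs <;> simp

lemma Sval_of_top {p : ℕ} (lam : Fin p → ℝ) {β : Fin p → ℝ} {ck v : ℝ}
    (hβ : ∀ j, |β j| ≠ ck → |β j| < |v|) :
    Sval lam β ck v =
      ∑ j, if |β j| = ck then lam ((sortPerm (cupd β ck v))⁻¹ j) else 0 := by
  unfold Sval
  refine Finset.sum_congr rfl fun j _ => ?_
  rw [abs_cupd]
  by_cases h : |β j| = ck
  · simp [h]
  · simp [h, (hβ j h).ne]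

lemma residual_cupd {n p : ℕ} (X : Matrix (Fin n) (Fin p) ℝ) (y : Fin n → ℝ)
    (β : Fin p → ℝ) (ck z : ℝ) (i : Fin n) :
    y i - ∑ j, X i j * cupd β ck z j =
      (y i - ∑ j, X i j * β j) + (ck - z) * xtil X β ck i := by
  have h : ∑ j, X i j * β j = ∑ j, X i j * cupd β ck z j + (ck - z) * xtil X β ck i := by
    unfold xtil cupd
    rw [Finset.mul_sum, ← Finset.sum_add_distrib]
    refine Finset.sum_congr rfl fun j _ => ?_
    split_ifs with hj
    · conv_lhs => rw [← sgn_mul_abs (β j), hj]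
      ring
    · ring
  rw [h]; ring

lemma sqnorm_residual_cupd {n p : ℕ} (X : Matrix (Fin n) (Fin p) ℝ) (y : Fin n → ℝ)
    (β : Fin p → ℝ) (ck z : ℝ) :
    sqnorm (fun i => y i - ∑ j, X i j * cupd β ck z j) =
      sqnorm (xtil X β ck) * z ^ 2 - 2 * gam X y β ck * z +
        sqnorm (fun i => y i - ∑ j, X i j * cupd β ck 0 j) := by
  simp only [residual_cupd X y β ck]
  unfold gam sqnorm
  simp only [mul_add, add_mul, Finset.mul_sum, Finset.sum_mul, ← Finset.sum_add_distrib,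
    ← Finset.sum_sub_distrib]
  refine Finset.sum_congr rfl fun i _ => ?_
  ring

/-- Soft thresholding: the minimizer of `z ↦ (ω z² - 2 g z) / 2 + s |z|`. -/
lemma soft_threshold_le {ω g s : ℝ} (hω : 0 < ω) (hs : s ≤ |g|) (w : ℝ) :
    (1 / 2) * (ω * (sgn g / ω * (|g| - s)) ^ 2 - 2 * g * (sgn g / ω * (|g| - s))) +
        s * |sgn g / ω * (|g| - s)| ≤
      (1 / 2) * (ω * w ^ 2 - 2 * g * w) + s * |w| := by
  set a := (|g| - s) / ω with ha
  have hωa : ω * a = |g| - s := by rw [ha]; field_simp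
  have ha0 : 0 ≤ a := div_nonneg (sub_nonneg.mpr hs) hω.le
  have hz : sgn g / ω * (|g| - s) = sgn g * a := by rw [ha]; ring
  have hsq : sgn g ^ 2 = 1 := by rw [← sq_abs, abs_sgn, one_pow]
  have hgz : g * (sgn g * a) = |g| * a := by rw [← sgn_mul_self g]; ring
  rw [hz, abs_mul, abs_sgn, one_mul, abs_of_nonneg ha0, mul_pow, hsq, mul_assoc 2 g, hgz]
  have hgw : g * w ≤ |g| * |w| := (le_abs_self _).trans (abs_mul g w).le
  have hg : |g| = ω * a + s := by rw [hωa]; ring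
  rw [← sq_abs w]
  rw [hg] at hgw ⊢
  nlinarith [mul_nonneg hω.le (sq_nonneg (|w| - a))]

/-- top case of the SLOPE thresholding operator. With `c'_1 = max c^{∖k}`,
if `|γ| ≥ ω c'_1 + S(c'_1 + ε)` then `z* = (sign γ / ω)(|γ| − S(c'_1 + ε))` minimizes `G`. -/
theorem top_case_minimizes_G
    {n p m : ℕ} (hn : 0 < n) (hp : 0 < p) (hm : 0 < m)
    (lam : Fin p → ℝ)
    (hlam_mono : ∀ i j : Fin p, i ≤ j → lam j ≤ lam i)
    (hlam_nonneg : ∀ j, 0 ≤ lam j)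
    (β : Fin p → ℝ) (c : Fin m → ℝ)
    (hc_anti : StrictAnti c) (hc_nonneg : ∀ i, 0 ≤ c i)
    (h_attain : ∀ i, ∃ j, |β j| = c i)
    (h_cover : ∀ j, ∃ i, |β j| = c i)
    (k : Fin m)
    (ε : ℝ) (hε_pos : 0 < ε)
    (hε_sep : ∀ i j, i ≠ j → ε < |c i - c j|)
    (hε_min : ∀ i, c i ≠ 0 → ε < c i)
    (X : Matrix (Fin n) (Fin p) ℝ) (y : Fin n → ℝ)
    (hm2 : 2 ≤ m)
    (hω : 0 < sqnorm (xtil X β (c k)))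
    (c1 : ℝ)
    (hc1_mem : ∃ i, i ≠ k ∧ c1 = c i)
    (hc1_max : ∀ i, i ≠ k → c i ≤ c1)
    (hγ : sqnorm (xtil X β (c k)) * c1 + Sval lam β (c k) (c1 + ε) ≤ |gam X y β (c k)|) :
    ∀ w : ℝ,
      Gfun lam X y β (c k)
          (sgn (gam X y β (c k)) / sqnorm (xtil X β (c k)) *
            (|gam X y β (c k)| - Sval lam β (c k) (c1 + ε)))
        ≤ Gfun lam X y β (c k) w := by
  intro w
  have hlam : Antitone lam := fun i j hij => hlam_mono i j hij
  have hc1 : 0 ≤ c1 := by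
    obtain ⟨i, -, rfl⟩ := hc1_mem
    exact hc_nonneg i
  have hβ : ∀ j, |β j| ≠ c k → |β j| ≤ c1 := by
    intro j hj
    obtain ⟨i, hi⟩ := h_cover j
    rw [hi] at hj ⊢
    exact hc1_max i fun hik => hj (congrArg c hik)
  have hv : c1 < |c1 + ε| := by
    rw [abs_of_pos (by linarith)]
    linarith
  have hS := Sval_of_top lam fun j hj => (hβ j hj).trans_lt hv
  set s := Sval lam β (c k) (c1 + ε)
  set ω := sqnorm (xtil X β (c k))
  set g := gam X y β (c k)
  set z := sgn g / ω * (|g| - s) with hz_def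
  have hωc1 : 0 ≤ ω * c1 := mul_nonneg hω.le hc1
  have hz : c1 ≤ |z| := by
    rw [hz_def, abs_mul, abs_div, abs_sgn, abs_of_pos hω, abs_of_nonneg (by linarith),
      one_div_mul_eq_div, le_div_iff₀ hω]
    linarith
  have hHz : sortedL1 lam (cupd β (c k) z) ≤ _ := sum_mul_abs_comp_perm_le hlam
    (antitone_abs_cupd_of_top hβ hv hz (antitone_abs_comp_sortPerm (cupd β (c k) (c1 + ε))))
    (sortPerm (cupd β (c k) z))
  have hHw := sum_mul_abs_comp_perm_le_sortedL1 hlam (cupd β (c k) w)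
    (sortPerm (cupd β (c k) (c1 + ε)))
  rw [sum_mul_abs_cupd_perm, ← hS] at hHz hHw
  have hmin := soft_threshold_le (g := g) (s := s) hω (by linarith) w
  unfold Gfun Hfun
  rw [sqnorm_residual_cupd X y β (c k) z, sqnorm_residual_cupd X y β (c k) w]
  linarith
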